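/- There exist C ≥ 0 and Δt* > 0 such that for all 0 < Δt ≤ Δt* and all q ∈ ℝⁿ, |E_{G,U}[δ_Δt(q,G,U)] + Δt ∇V(q) + √2 Δt² ∫_{ℝⁿ} ξ₊(q,g) g γ(dg)| ≤ C Δt^{5/2}. -/

import Mathlib

open MeasureTheory RealInnerProductSpace

noncomputable section

abbrev En (n : ℕ) := EuclideanSpace ℝ (Fin n)

/-- Gaussian proposal density of the Euler–Maruyama scheme. -/
def Tker {n : ℕ} (V : En n → ℝ) (dt : ℝ) (q q' : En n) : ℝ :=
  (4 * Real.pi * dt) ^ (-(n : ℝ) / 2) *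
    Real.exp (-‖q' - q + dt • gradient V q‖ ^ 2 / (4 * dt))

/-- Metropolis acceptance probability. -/
def Rk {n : ℕ} (V : En n → ℝ) (dt : ℝ) (q q' : En n) : ℝ :=
  min 1 (Real.exp (-V q') * Tker V dt q' q / (Real.exp (-V q) * Tker V dt q q'))

/-- proposal move -/
def propMove {n : ℕ} (V : En n → ℝ) (dt : ℝ) (q g : En n) : En n :=
  q - dt • gradient V q + Real.sqrt (2 * dt) • g

def xi {n : ℕ} (V : En n → ℝ) (q g : En n) : ℝ :=
  -(Real.sqrt 2 / 6) * iteratedFDeriv ℝ 3 V q (fun _ => g) +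
    (Real.sqrt 2 / 2) * ⟪gradient V q, fderiv ℝ (gradient V) q g⟫

def xiPlus {n : ℕ} (V : En n → ℝ) (q g : En n) : ℝ := max (xi V q g) 0

/-- standard Gaussian measure on ℝⁿ -/
def gauss (n : ℕ) : Measure (En n) :=
  volume.withDensity fun g =>
    ENNReal.ofReal ((2 * Real.pi) ^ (-(n : ℝ) / 2) * Real.exp (-‖g‖ ^ 2 / 2))

/-- fundamental domain of the torus -/
def Box (n : ℕ) (L : ℝ) : Set (En n) := {q | ∀ i, q i ∈ Set.Ico (0 : ℝ) L}

/-- integral with respect to the Gibbs measure μ on the torus M -/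
def muInt {n : ℕ} (V : En n → ℝ) (L : ℝ) (f : En n → ℝ) : ℝ :=
  (∫ q in Box n L, Real.exp (-V q))⁻¹ * ∫ q in Box n L, f q * Real.exp (-V q)

/-- Laplacian -/
def lap {n : ℕ} (ψ : En n → ℝ) (q : En n) : ℝ :=
  ∑ i, iteratedFDeriv ℝ 2 ψ q (fun _ => EuclideanSpace.single i (1 : ℝ))

/-- generator of the overdamped Langevin dynamics -/
def gen {n : ℕ} (V ψ : En n → ℝ) (q : En n) : ℝ :=
  -⟪gradient V q, gradient ψ q⟫ + lap ψ q

/-- MALA transition operator on periodic functions -/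
def Pmala {n : ℕ} (V : En n → ℝ) (dt : ℝ) (f : En n → ℝ) (q : En n) : ℝ :=
  f q + ∫ q', Rk V dt q q' * Tker V dt q q' * (f q' - f q)

/-- the operator D₁ -/
def D1op {n : ℕ} (V ψ : En n → ℝ) (q : En n) : ℝ :=
  2 * ∑ i, ∑ j, (iteratedFDeriv ℝ 2 V q ![EuclideanSpace.single i (1:ℝ), EuclideanSpace.single j (1:ℝ)]) *
      (iteratedFDeriv ℝ 2 ψ q ![EuclideanSpace.single i (1:ℝ), EuclideanSpace.single j (1:ℝ)])
    + ⟪gradient (fun x => lap V x) q, gradient ψ q⟫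
    - ⟪gradient V q, fderiv ℝ (gradient V) q (gradient ψ q)⟫

/-- the operator D₂ -/
def D2op {n : ℕ} (V ψ : En n → ℝ) (q : En n) : ℝ :=
  -Real.sqrt 2 * ⟪∫ g, xiPlus V q g • g ∂(gauss n), gradient ψ q⟫

/-- the operator A appearing in the expansion of the MALA evolution operator -/
def Aop {n : ℕ} (V ψ : En n → ℝ) (q : En n) : ℝ :=
  (gen V (gen V ψ) q + D1op V ψ q + D2op V ψ q) / 2

/-- Metropolized increment -/
def deltaInc {n : ℕ} (V : En n → ℝ) (dt : ℝ) (q g : En n) (u : ℝ) : En n :=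
  if u ≤ Rk V dt q (propMove V dt q g) then (-dt) • gradient V q + Real.sqrt (2 * dt) • g
  else 0

/-- expectation over G (std Gaussian) and U (uniform on [0,1]) of the increment -/
def EguDelta {n : ℕ} (V : En n → ℝ) (dt : ℝ) (q : En n) : En n :=
  ∫ g, (∫ u in Set.Icc (0 : ℝ) 1, deltaInc V dt q g u) ∂(gauss n)

/-!
Write `ε = √dt`. The logarithm of the Metropolis–Hastings ratio is the error of the trapezoid rule
for `V` along the proposed move, plus `ε² / 4` times a difference of squared gradient norms. Taylor
expansion of both turns it into `-ε³ ξ + O(ε⁴)`, and since `1 - min 1 (exp a) = max (-a) 0 + O(a²)`,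
the move is rejected with probability `ε³ ξ₊ + O(ε⁴)`. The rejected displacement is
`√2 ε g + O(ε²)`, so rejections change the mean increment `-ε² ∇V` by
`-√2 ε⁴ ∫ ξ₊ g dγ + O(ε⁵)`. All error terms are uniform in `q` and grow polynomially in `g`, hence
they are integrable against the Gaussian.
-/

section Taylor

open scoped Nat

variable {E F : Type*} [NormedAddCommGroup E] [NormedSpace ℝ E] [NormedAddCommGroup F]
  [NormedSpace ℝ F] {f : E → F} {M : ℝ}

theorem norm_iteratedFDeriv_apply_const_le {k : ℕ} {x : E} (h : ‖iteratedFDeriv ℝ k f x‖ ≤ M)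
    (v : E) : ‖iteratedFDeriv ℝ k f x fun _ => v‖ ≤ M * ‖v‖ ^ k := by
  simpa using (iteratedFDeriv ℝ k f x).le_of_opNorm_le h fun _ => v

variable [CompleteSpace F]

theorem norm_map_add_sub_taylor_le {n : ℕ} (hf : ContDiff ℝ (n + 1) f)
    (hM : ∀ x, ‖iteratedFDeriv ℝ (n + 1) f x‖ ≤ M) (x v : E) :
    ‖f (x + v) - ∑ k ∈ Finset.range (n + 1), (k ! : ℝ)⁻¹ • iteratedFDeriv ℝ k f x fun _ => v‖
      ≤ M * ‖v‖ ^ (n + 1) := by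
  have hbound : ∀ t ∈ Set.uIoc (0 : ℝ) 1,
      ‖(1 - t) ^ n • iteratedFDeriv ℝ (n + 1) f (x + t • v) fun _ => v‖ ≤ M * ‖v‖ ^ (n + 1) := by
    intro t ht
    rw [Set.uIoc_of_le zero_le_one] at ht
    rw [norm_smul, norm_pow, Real.norm_of_nonneg (sub_nonneg.2 ht.2)]
    exact (mul_le_of_le_one_left (norm_nonneg _)
      (pow_le_one₀ (sub_nonneg.2 ht.2) (sub_le_self 1 ht.1.le))).trans
      (norm_iteratedFDeriv_apply_const_le (hM _) v)
  have hint := intervalIntegral.norm_integral_le_of_norm_le_const hbound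
  rw [sub_zero, abs_one, mul_one] at hint
  have hfact : ‖(n ! : ℝ)⁻¹‖ ≤ 1 := by
    rw [norm_inv, Real.norm_natCast]
    exact inv_le_one_of_one_le₀ (mod_cast n.factorial_pos)
  rw [map_add_eq_sum_add_integral_iteratedFDeriv fun _ _ => hf.contDiffAt, add_sub_cancel_left,
    norm_smul]
  exact (mul_le_of_le_one_left (norm_nonneg _) hfact).trans hint

/- Both `f (x + v)` and `Df(x + v) v` are expanded at `x`; the leading error is
`1/12 = 1/2 · 1/2! - 1/3!` times the third derivative. -/
theorem norm_trapezoid_error_sub_third_deriv_le (hf : ContDiff ℝ 4 f)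
    (hM : ∀ x, ‖iteratedFDeriv ℝ 4 f x‖ ≤ M) (x v : E) :
    ‖f x - f (x + v) + (1 / 2 : ℝ) • (fderiv ℝ f x v + fderiv ℝ f (x + v) v)
        - (1 / 12 : ℝ) • iteratedFDeriv ℝ 3 f x fun _ => v‖ ≤ 3 / 2 * (M * ‖v‖ ^ 4) := by
  set r₀ := f (x + v) - ∑ k ∈ Finset.range 4, (k ! : ℝ)⁻¹ • iteratedFDeriv ℝ k f x fun _ => v
    with hr₀
  set r₁ := fderiv ℝ f (x + v)
    - ∑ k ∈ Finset.range 3, (k ! : ℝ)⁻¹ • iteratedFDeriv ℝ k (fderiv ℝ f) x fun _ => v with hr₁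
  have h₀ : ‖r₀‖ ≤ M * ‖v‖ ^ 4 := norm_map_add_sub_taylor_le (mod_cast hf) hM x v
  have h₁ : ‖r₁ v‖ ≤ M * ‖v‖ ^ 4 := by
    have hr : ‖r₁‖ ≤ M * ‖v‖ ^ 3 := norm_map_add_sub_taylor_le (n := 2)
      (hf.fderiv_right (by norm_num)) (fun y => norm_iteratedFDeriv_fderiv.trans_le (hM y)) x v
    exact (r₁.le_of_opNorm_le hr v).trans_eq (by ring)
  have hsucc (k : ℕ) : iteratedFDeriv ℝ k (fderiv ℝ f) x (fun _ => v) v =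
      iteratedFDeriv ℝ (k + 1) f x fun _ => v :=
    (iteratedFDeriv_succ_apply_right (𝕜 := ℝ) (f := f) (x := x) fun _ : Fin (k + 1) => v).symm
  have hdecomp : f x - f (x + v) + (1 / 2 : ℝ) • (fderiv ℝ f x v + fderiv ℝ f (x + v) v)
      - (1 / 12 : ℝ) • (iteratedFDeriv ℝ 3 f x fun _ => v) = (1 / 2 : ℝ) • r₁ v - r₀ := by
    simp only [hr₀, hr₁, Finset.sum_range_succ, Finset.sum_range_zero, zero_add, sub_apply,
      add_apply, smul_apply, hsucc, Nat.factorial, Nat.reduceAdd]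
    simp only [iteratedFDeriv_zero_apply, iteratedFDeriv_one_apply]
    push_cast
    module
  rw [hdecomp]
  calc ‖(1 / 2 : ℝ) • r₁ v - r₀‖ ≤ 1 / 2 * ‖r₁ v‖ + ‖r₀‖ := by
        simpa [norm_smul] using norm_sub_le ((1 / 2 : ℝ) • r₁ v) r₀
    _ ≤ 3 / 2 * (M * ‖v‖ ^ 4) := by linarith

end Taylor

section Gradient

variable {E : Type*} [NormedAddCommGroup E] [InnerProductSpace ℝ E] [CompleteSpace E] {f : E → ℝ}
  {M : ℝ}

theorem norm_iteratedFDeriv_gradient (k : ℕ) (x : E) :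
    ‖iteratedFDeriv ℝ k (gradient f) x‖ = ‖iteratedFDeriv ℝ (k + 1) f x‖ :=
  ((InnerProductSpace.toDual ℝ E).symm.norm_iteratedFDeriv_comp_left (fderiv ℝ f) x k).trans
    norm_iteratedFDeriv_fderiv

theorem contDiff_gradient {n : ℕ} (hf : ContDiff ℝ (n + 1) f) : ContDiff ℝ n (gradient f) :=
  (InnerProductSpace.toDual ℝ E).symm.contDiff.comp (hf.fderiv_right le_rfl)

theorem norm_gradient_add_sub_le (hf : ContDiff ℝ 2 f)
    (hM : ∀ x, ‖iteratedFDeriv ℝ 2 f x‖ ≤ M) (x v : E) :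
    ‖gradient f (x + v) - gradient f x‖ ≤ M * ‖v‖ := by
  simpa using norm_map_add_sub_taylor_le (n := 0) (contDiff_gradient (mod_cast hf))
    (fun y => (norm_iteratedFDeriv_gradient 1 y).trans_le (hM y)) x v

theorem norm_gradient_add_sub_fderiv_le (hf : ContDiff ℝ 3 f)
    (hM : ∀ x, ‖iteratedFDeriv ℝ 3 f x‖ ≤ M) (x v : E) :
    ‖gradient f (x + v) - gradient f x - fderiv ℝ (gradient f) x v‖ ≤ M * ‖v‖ ^ 2 := by
  simpa [Finset.sum_range_succ, sub_sub] using norm_map_add_sub_taylor_le (n := 1)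
    (contDiff_gradient (mod_cast hf))
    (fun y => (norm_iteratedFDeriv_gradient 2 y).trans_le (hM y)) x v

theorem abs_norm_gradient_add_sq_sub_le {M₁ M₂ M₃ : ℝ} (hf : ContDiff ℝ 3 f)
    (h₁ : ∀ x, ‖gradient f x‖ ≤ M₁) (h₂ : ∀ x, ‖iteratedFDeriv ℝ 2 f x‖ ≤ M₂)
    (h₃ : ∀ x, ‖iteratedFDeriv ℝ 3 f x‖ ≤ M₃) (x v : E) :
    |‖gradient f (x + v)‖ ^ 2 - ‖gradient f x‖ ^ 2
        - 2 * ⟪gradient f x, fderiv ℝ (gradient f) x v⟫| ≤ (2 * M₁ * M₃ + M₂ ^ 2) * ‖v‖ ^ 2 := by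
  set p := gradient f x
  set p' := gradient f (x + v)
  set A := fderiv ℝ (gradient f) x
  have hsq : ‖p'‖ ^ 2 - ‖p‖ ^ 2 - 2 * ⟪p, A v⟫ = 2 * ⟪p, p' - p - A v⟫ + ‖p' - p‖ ^ 2 := by
    rw [norm_sub_sq_real, inner_sub_right, inner_sub_right, real_inner_self_eq_norm_sq,
      real_inner_comm p p']
    ring
  have hinner : |⟪p, p' - p - A v⟫| ≤ M₁ * (M₃ * ‖v‖ ^ 2) :=
    (abs_real_inner_le_norm _ _).trans (mul_le_mul (h₁ x)
      (norm_gradient_add_sub_fderiv_le hf h₃ x v) (norm_nonneg _) ((norm_nonneg _).trans (h₁ x)))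
  have hdiff : ‖p' - p‖ ^ 2 ≤ (M₂ * ‖v‖) ^ 2 :=
    pow_le_pow_left₀ (norm_nonneg _) (norm_gradient_add_sub_le (hf.of_le (by norm_num)) h₂ x v) 2
  calc |‖p'‖ ^ 2 - ‖p‖ ^ 2 - 2 * ⟪p, A v⟫|
      ≤ 2 * |⟪p, p' - p - A v⟫| + ‖p' - p‖ ^ 2 := by
        rw [hsq]
        exact (abs_add_le _ _).trans_eq (by rw [abs_mul, abs_two, abs_sq])
    _ ≤ 2 * (M₁ * (M₃ * ‖v‖ ^ 2)) + (M₂ * ‖v‖) ^ 2 := by gcongr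
    _ = (2 * M₁ * M₃ + M₂ ^ 2) * ‖v‖ ^ 2 := by ring

end Gradient

section BoundedDerivs

/-- `f` is `C^N` with globally bounded derivatives of orders `1, …, N`; nothing is assumed on the
size of `f` itself. -/
structure HasBoundedDerivs {E F : Type*} [NormedAddCommGroup E] [NormedSpace ℝ E]
    [NormedAddCommGroup F] [NormedSpace ℝ F] (N : ℕ) (f : E → F) : Prop where
  contDiff : ContDiff ℝ N f
  exists_norm_iteratedFDeriv_le :
    ∀ k ∈ Finset.Icc 1 N, ∃ M, ∀ x, ‖iteratedFDeriv ℝ k f x‖ ≤ M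

namespace HasBoundedDerivs

theorem of_le {E F : Type*} [NormedAddCommGroup E] [NormedSpace ℝ E] [NormedAddCommGroup F]
    [NormedSpace ℝ F] {f : E → F} {N N' : ℕ} (hf : HasBoundedDerivs N f) (h : N' ≤ N) :
    HasBoundedDerivs N' f :=
  ⟨hf.contDiff.of_le (mod_cast h), fun k hk =>
    hf.exists_norm_iteratedFDeriv_le k (Finset.Icc_subset_Icc_right h hk)⟩

variable {E : Type*} [NormedAddCommGroup E] [InnerProductSpace ℝ E] [CompleteSpace E] {f : E → ℝ}

theorem exists_norm_gradient_le (hf : HasBoundedDerivs 1 f) : ∃ M, ∀ x, ‖gradient f x‖ ≤ M := by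
  obtain ⟨M, hM⟩ := hf.exists_norm_iteratedFDeriv_le 1 (by simp)
  exact ⟨M, fun x => by
    rw [← norm_iteratedFDeriv_zero (𝕜 := ℝ), norm_iteratedFDeriv_gradient]
    exact hM x⟩

theorem exists_norm_inner_gradient_fderiv_gradient_le (hf : HasBoundedDerivs 2 f) :
    ∃ M, ∀ x v, ‖⟪gradient f x, fderiv ℝ (gradient f) x v⟫‖ ≤ M * ‖v‖ := by
  obtain ⟨M₁, h₁⟩ := (hf.of_le one_le_two).exists_norm_gradient_le
  obtain ⟨M₂, h₂⟩ := hf.exists_norm_iteratedFDeriv_le 2 (by simp)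
  refine ⟨M₁ * M₂, fun x v => ?_⟩
  have hA : ‖fderiv ℝ (gradient f) x‖ ≤ M₂ := by
    rw [← norm_iteratedFDeriv_one, norm_iteratedFDeriv_gradient]
    exact h₂ x
  calc ‖⟪gradient f x, fderiv ℝ (gradient f) x v⟫‖ ≤ M₁ * (M₂ * ‖v‖) :=
        (norm_inner_le_norm _ _).trans (mul_le_mul (h₁ x)
          ((fderiv ℝ (gradient f) x).le_of_opNorm_le hA v) (norm_nonneg _)
          ((norm_nonneg _).trans (h₁ x)))
    _ = M₁ * M₂ * ‖v‖ := by ring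

end HasBoundedDerivs

end BoundedDerivs

section Periodic

theorem periodic_of_mem_span_int {E α : Type*} [AddCommGroup E] {F : E → α} {s : Set E}
    (hF : ∀ v ∈ s, Function.Periodic F v) {v : E} (hv : v ∈ Submodule.span ℤ s) :
    Function.Periodic F v := by
  induction hv using Submodule.span_induction with
  | mem v hv => exact hF v hv
  | zero => exact fun x => by rw [add_zero]
  | add v w _ _ hv hw => exact hv.add_period hw
  | smul k v _ hv => exact hv.zsmul k

variable {ι E W : Type*} [NormedAddCommGroup E] [NormedSpace ℝ E] [NormedAddCommGroup W]

theorem exists_norm_le_of_periodic_basis [Finite ι] (b : Module.Basis ι ℝ E) {F : E → W}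
    (hF : ∀ i, Function.Periodic F (b i)) (hc : Continuous F) : ∃ M, ∀ x, ‖F x‖ ≤ M := by
  have := Fintype.ofFinite ι
  have := b.finiteDimensional_of_finite
  have := FiniteDimensional.proper_real E
  obtain ⟨M, hM⟩ := (isCompact_closedBall (0 : E) (∑ i, ‖b i‖)).exists_bound_of_continuousOn
    hc.continuousOn
  refine ⟨M, fun x => ?_⟩
  have hfloor : Function.Periodic F (ZSpan.floor b x : E) :=
    periodic_of_mem_span_int (Set.forall_mem_range.2 hF) (ZSpan.floor b x).2
  rw [← hfloor.sub_eq x, ← ZSpan.fract_apply]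
  exact hM _ (mem_closedBall_zero_iff.2 (ZSpan.norm_fract_le b x))

theorem periodic_iteratedFDeriv [NormedSpace ℝ W] {F : E → W} {c : E}
    (hF : Function.Periodic F c) (k : ℕ) : Function.Periodic (iteratedFDeriv ℝ k F) c := fun x => by
  rw [← iteratedFDeriv_comp_add_right, hF.funext]

variable [NormedSpace ℝ W]

theorem hasBoundedDerivs_of_periodic_basis [Finite ι] {N : ℕ} (b : Module.Basis ι ℝ E) {F : E → W}
    (hF : ∀ i, Function.Periodic F (b i)) (hc : ContDiff ℝ N F) : HasBoundedDerivs N F :=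
  ⟨hc, fun k hk => exists_norm_le_of_periodic_basis b (fun i => periodic_iteratedFDeriv (hF i) k)
    (hc.continuous_iteratedFDeriv (mod_cast (Finset.mem_Icc.1 hk).2))⟩

end Periodic

section PolyBigO

variable {Q E W W' : Type*} [NormedAddCommGroup E] [NormedAddCommGroup W] [NormedAddCommGroup W']

/-- `f ε q g = O(ε ^ k)` as `ε → 0`, uniformly in the base point `q` and with polynomial growth in
the noise `g`. The range of `ε` is fixed to `(0, 1]`, on which `ε ^ l ≤ ε ^ k` for `k ≤ l`. -/
def IsPolyBigO (k : ℕ) (f : ℝ → Q → E → W) : Prop :=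
  ∃ C ≥ 0, ∃ m : ℕ, ∀ ε ∈ Set.Ioc (0 : ℝ) 1, ∀ q g, ‖f ε q g‖ ≤ C * ε ^ k * (1 + ‖g‖) ^ m

namespace IsPolyBigO

variable {j k l m : ℕ} {f f' : ℝ → Q → E → W} {φ : ℝ → Q → E → W'}

theorem of_bound (hφ : IsPolyBigO k φ) (c : ℝ)
    (h : ∀ ε ∈ Set.Ioc (0 : ℝ) 1, ∀ q g, ‖f ε q g‖ ≤ c * ‖φ ε q g‖) : IsPolyBigO k f := by
  obtain ⟨C, hC, m, hφ⟩ := hφ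
  refine ⟨|c| * C, by positivity, m, fun ε hε q g => (h ε hε q g).trans ?_⟩
  calc c * ‖φ ε q g‖ ≤ |c| * (C * ε ^ k * (1 + ‖g‖) ^ m) := by
        gcongr
        · exact le_abs_self c
        · exact hφ ε hε q g
    _ = |c| * C * ε ^ k * (1 + ‖g‖) ^ m := by ring

theorem congr (hf' : IsPolyBigO k f') (h : ∀ ε ∈ Set.Ioc (0 : ℝ) 1, ∀ q g, f ε q g = f' ε q g) :
    IsPolyBigO k f :=
  hf'.of_bound 1 fun ε hε q g => by rw [one_mul, h ε hε q g]

theorem norm (hf : IsPolyBigO k f) : IsPolyBigO k fun ε q g => ‖f ε q g‖ :=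
  hf.of_bound 1 fun ε _ q g => by rw [one_mul, norm_norm]

theorem const_smul [NormedSpace ℝ W] (hf : IsPolyBigO k f) (c : ℝ) :
    IsPolyBigO k fun ε q g => c • f ε q g :=
  hf.of_bound ‖c‖ fun ε _ q g => norm_smul_le c (f ε q g)

theorem of_norm_le_const (M : ℝ) (h : ∀ ε ∈ Set.Ioc (0 : ℝ) 1, ∀ q g, ‖f ε q g‖ ≤ M) :
    IsPolyBigO 0 f :=
  ⟨|M|, abs_nonneg M, 0, fun ε hε q g => by
    simpa using (h ε hε q g).trans (le_abs_self M)⟩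

theorem noise : IsPolyBigO 0 fun (_ : ℝ) (_ : Q) (g : E) => g :=
  ⟨1, zero_le_one, 1, fun ε _ _ g => by simp⟩

theorem mono (hf : IsPolyBigO l f) (hkl : k ≤ l) : IsPolyBigO k f := by
  obtain ⟨C, hC, m, hf⟩ := hf
  refine ⟨C, hC, m, fun ε hε q g => (hf ε hε q g).trans ?_⟩
  gcongr ?_ * ?_ * _
  exact pow_le_pow_of_le_one hε.1.le hε.2 hkl

theorem add (hf : IsPolyBigO k f) (hf' : IsPolyBigO k f') :
    IsPolyBigO k fun ε q g => f ε q g + f' ε q g := by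
  obtain ⟨C, hC, m, hf⟩ := hf
  obtain ⟨C', hC', m', hf'⟩ := hf'
  refine ⟨C + C', by positivity, max m m', fun ε hε q g => ?_⟩
  have hε0 : 0 ≤ ε ^ k := pow_nonneg hε.1.le k
  have hg : 1 ≤ 1 + ‖g‖ := le_add_of_nonneg_right (norm_nonneg g)
  calc ‖f ε q g + f' ε q g‖ ≤ C * ε ^ k * (1 + ‖g‖) ^ m + C' * ε ^ k * (1 + ‖g‖) ^ m' :=
        norm_add_le_of_le (hf ε hε q g) (hf' ε hε q g)
    _ ≤ C * ε ^ k * (1 + ‖g‖) ^ max m m' + C' * ε ^ k * (1 + ‖g‖) ^ max m m' := by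
        gcongr
        · exact le_max_left m m'
        · exact le_max_right m m'
    _ = (C + C') * ε ^ k * (1 + ‖g‖) ^ max m m' := by ring

theorem sub (hf : IsPolyBigO k f) (hf' : IsPolyBigO k f') :
    IsPolyBigO k fun ε q g => f ε q g - f' ε q g :=
  (hf.add (hf'.of_bound (f := fun ε q g => -f' ε q g) 1 fun ε _ q g => by simp)).congr
    fun ε _ q g => sub_eq_add_neg _ _

theorem smul [NormedSpace ℝ W] {a : ℝ → Q → E → ℝ} (ha : IsPolyBigO j a) (hf : IsPolyBigO k f) :
    IsPolyBigO (j + k) fun ε q g => a ε q g • f ε q g := by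
  obtain ⟨C, hC, m, ha⟩ := ha
  obtain ⟨C', hC', m', hf⟩ := hf
  refine ⟨C * C', by positivity, m + m', fun ε hε q g => ?_⟩
  have hε0 : 0 ≤ ε := hε.1.le
  calc ‖a ε q g • f ε q g‖
      ≤ (C * ε ^ j * (1 + ‖g‖) ^ m) * (C' * ε ^ k * (1 + ‖g‖) ^ m') := by
        rw [norm_smul]
        gcongr
        · exact ha ε hε q g
        · exact hf ε hε q g
    _ = C * C' * ε ^ (j + k) * (1 + ‖g‖) ^ (m + m') := by ring

theorem norm_pow (hf : IsPolyBigO k f) (j : ℕ) : IsPolyBigO (j * k) fun ε q g => ‖f ε q g‖ ^ j := by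
  obtain ⟨C, hC, m, hf⟩ := hf
  refine ⟨C ^ j, by positivity, m * j, fun ε hε q g => ?_⟩
  calc ‖‖f ε q g‖ ^ j‖ ≤ (C * ε ^ k * (1 + ‖g‖) ^ m) ^ j := by
        rw [_root_.norm_pow, norm_norm]
        gcongr
        exact hf ε hε q g
    _ = C ^ j * ε ^ (j * k) * (1 + ‖g‖) ^ (m * j) := by ring

theorem pow_smul [NormedSpace ℝ W] (hf : IsPolyBigO k f) (j : ℕ) :
    IsPolyBigO (j + k) fun ε q g => ε ^ j • f ε q g :=
  smul (a := fun ε _ _ => ε ^ j)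
    ⟨1, zero_le_one, 0, fun ε hε _ _ => by simp [abs_of_pos hε.1]⟩ hf

variable [MeasurableSpace E]

theorem integrable {μ : Measure E} (hμ : ∀ m : ℕ, Integrable (fun g => (1 + ‖g‖) ^ m) μ)
    (hf : IsPolyBigO k f) {ε : ℝ} (hε : ε ∈ Set.Ioc (0 : ℝ) 1) (q : Q)
    (hmeas : AEStronglyMeasurable (f ε q) μ) : Integrable (f ε q) μ := by
  obtain ⟨C, -, m, hf⟩ := hf
  exact ((hμ m).const_mul (C * ε ^ k)).mono' hmeas (.of_forall (hf ε hε q))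

theorem exists_norm_integral_le [NormedSpace ℝ W] {μ : Measure E}
    (hμ : ∀ m : ℕ, Integrable (fun g => (1 + ‖g‖) ^ m) μ) (hf : IsPolyBigO k f) :
    ∃ C ≥ 0, ∀ ε ∈ Set.Ioc (0 : ℝ) 1, ∀ q, ‖∫ g, f ε q g ∂μ‖ ≤ C * ε ^ k := by
  obtain ⟨C, hC, m, hf⟩ := hf
  refine ⟨C * ∫ g, (1 + ‖g‖) ^ m ∂μ,
    mul_nonneg hC (integral_nonneg fun g => by positivity), fun ε hε q => ?_⟩
  calc ‖∫ g, f ε q g ∂μ‖ ≤ ∫ g, C * ε ^ k * (1 + ‖g‖) ^ m ∂μ :=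
        norm_integral_le_of_norm_le ((hμ m).const_mul _) (.of_forall (hf ε hε q))
    _ = (C * ∫ g, (1 + ‖g‖) ^ m ∂μ) * ε ^ k := by rw [integral_const_mul]; ring

end IsPolyBigO

end PolyBigO

section Gaussian

open ProbabilityTheory

theorem integrable_one_add_norm_pow {E : Type*} [NormedAddCommGroup E] [NormedSpace ℝ E]
    [CompleteSpace E] [SecondCountableTopology E] [MeasurableSpace E] [BorelSpace E]
    (μ : Measure E) [IsGaussian μ] (m : ℕ) : Integrable (fun g => (1 + ‖g‖) ^ m) μ := by
  have hid : MemLp (fun g => ‖g‖) m μ := (IsGaussian.memLp_id μ m (by simp)).norm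
  have h : MemLp (fun g : E => 1 + ‖g‖) m μ := (memLp_const (1 : ℝ)).add hid
  refine h.integrable_norm_pow'.congr (.of_forall fun g => ?_)
  simp only [Real.norm_of_nonneg (by positivity : 0 ≤ 1 + ‖g‖)]

theorem charFun_gauss (n : ℕ) (t : En n) :
    charFun (gauss n) t = Complex.exp (-‖t‖ ^ 2 / 2) := by
  have hnorm : (((2 * Real.pi) ^ (-(n : ℝ) / 2) : ℝ) : ℂ) * (2 * Real.pi) ^ ((n : ℂ) / 2) = 1 := by
    rw [neg_div, Real.rpow_neg (by positivity), Complex.ofReal_inv,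
      Complex.ofReal_cpow (by positivity)]
    push_cast
    exact inv_mul_cancel₀ (by simp [Complex.cpow_eq_zero_iff, Real.pi_ne_zero])
  calc charFun (gauss n) t
      = ∫ g : En n, ((2 * Real.pi) ^ (-(n : ℝ) / 2) : ℝ)
          * Complex.exp (-(1 / 2) * ‖g‖ ^ 2 + Complex.I * ⟪t, g⟫) := by
        rw [charFun_apply, gauss,
          integral_withDensity_eq_integral_toReal_smul (by fun_prop) (by simp)]
        congr with g
        rw [ENNReal.toReal_ofReal (by positivity), Complex.real_smul, Complex.ofReal_mul, mul_assoc,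
          Complex.ofReal_exp, ← Complex.exp_add, real_inner_comm]
        push_cast
        ring_nf
    _ = Complex.exp (-‖t‖ ^ 2 / 2) := by
        rw [integral_const_mul, GaussianFourier.integral_cexp_neg_mul_sq_norm_add (by norm_num),
          finrank_euclideanSpace_fin, ← mul_assoc, div_div_eq_mul_div, div_one,
          mul_comm (Real.pi : ℂ) 2, hnorm, one_mul, Complex.I_sq]
        ring_nf

theorem gauss_eq_stdGaussian (n : ℕ) : gauss n = stdGaussian (En n) := by
  have hmass : (gauss n).real Set.univ = 1 := by
    simpa using charFun_gauss n 0
  have := isProbabilityMeasure_iff_real.2 hmass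
  refine Measure.ext_of_charFun (funext fun t => ?_)
  rw [charFun_gauss, charFun_stdGaussian]

end Gaussian

section Acceptance

variable {n : ℕ} {V : En n → ℝ}

/-- The logarithm of the Metropolis–Hastings ratio for the move `q → q + d` with time step `dt`. The
terms of order `1 / dt` coming from the two proposal densities cancel. -/
def logRatio (V : En n → ℝ) (dt : ℝ) (q d : En n) : ℝ :=
  V q - V (q + d) + (1 / 2) * (⟪gradient V q, d⟫ + ⟪gradient V (q + d), d⟫)
    + dt / 4 * (‖gradient V q‖ ^ 2 - ‖gradient V (q + d)‖ ^ 2)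

theorem Rk_add_eq_min_exp_logRatio (V : En n → ℝ) {dt : ℝ} (hdt : 0 < dt) (q d : En n) :
    Rk V dt q (q + d) = min 1 (Real.exp (logRatio V dt q d)) := by
  have hc : (0 : ℝ) < (4 * Real.pi * dt) ^ (-(n : ℝ) / 2) := by positivity
  have hback : q - (q + d) + dt • gradient V (q + d) = dt • gradient V (q + d) - d := by abel
  have hforth : q + d - q + dt • gradient V q = dt • gradient V q + d := by abel
  rw [Rk, Tker, Tker, mul_left_comm, mul_left_comm (Real.exp (-V q)), mul_div_mul_left _ _ hc.ne',
    ← Real.exp_add, ← Real.exp_add, ← Real.exp_sub, hback, hforth, norm_sub_sq_real,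
    norm_add_sq_real, logRatio, norm_smul, norm_smul, real_inner_smul_left, real_inner_smul_left,
    Real.norm_of_nonneg hdt.le]
  congr 2
  field_simp
  ring

/-- The proposed displacement, in terms of `ε = √dt`. -/
def disp (V : En n → ℝ) (ε : ℝ) (q g : En n) : En n := (√2 * ε) • g - ε ^ 2 • gradient V q

/-- The acceptance probability of the move `q → q + disp V ε q g`, with time step `dt = ε ^ 2`. -/
def acceptProb (V : En n → ℝ) (ε : ℝ) (q g : En n) : ℝ := Rk V (ε ^ 2) q (q + disp V ε q g)

theorem isPolyBigO_sqrt_two_mul_smul {Q E : Type*} [NormedAddCommGroup E] [NormedSpace ℝ E] :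
    IsPolyBigO 1 fun (ε : ℝ) (_ : Q) (g : E) => (√2 * ε) • g :=
  ((IsPolyBigO.noise.pow_smul 1).const_smul √2).congr fun ε _ _ g => by rw [pow_one, smul_smul]

theorem isPolyBigO_disp_sub (hV : HasBoundedDerivs 1 V) :
    IsPolyBigO 2 fun ε q g => disp V ε q g - (√2 * ε) • g := by
  obtain ⟨M, hM⟩ := hV.exists_norm_gradient_le
  have hgrad : IsPolyBigO 0 fun (_ : ℝ) q (_ : En n) => -gradient V q :=
    .of_norm_le_const M fun _ _ q _ => (norm_neg _).trans_le (hM q)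
  exact (hgrad.pow_smul 2).congr fun ε _ q g => by rw [disp, sub_sub_cancel_left, smul_neg]

theorem isPolyBigO_disp (hV : HasBoundedDerivs 1 V) : IsPolyBigO 1 (disp V) :=
  (((isPolyBigO_disp_sub hV).mono one_le_two).add isPolyBigO_sqrt_two_mul_smul).congr
    fun _ _ _ _ => (sub_add_cancel _ _).symm

theorem isPolyBigO_xi (hV : HasBoundedDerivs 3 V) : IsPolyBigO 0 fun (_ : ℝ) q g => xi V q g := by
  obtain ⟨M₃, h₃⟩ := hV.exists_norm_iteratedFDeriv_le 3 (by simp)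
  obtain ⟨M, hM⟩ := (hV.of_le (by norm_num)).exists_norm_inner_gradient_fderiv_gradient_le
  have hcubic : IsPolyBigO 0 fun (_ : ℝ) q (g : En n) => iteratedFDeriv ℝ 3 V q fun _ => g :=
    (IsPolyBigO.noise.norm_pow 3).of_bound M₃ fun _ _ q g => by
      simpa using norm_iteratedFDeriv_apply_const_le (h₃ q) g
  have hlinear : IsPolyBigO 0 fun (_ : ℝ) q (g : En n) =>
      ⟪gradient V q, fderiv ℝ (gradient V) q g⟫ :=
    IsPolyBigO.noise.of_bound M fun _ _ q g => hM q g
  exact (hcubic.const_smul (-(√2 / 6))).add (hlinear.const_smul (√2 / 2))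

theorem isPolyBigO_xiPlus (hV : HasBoundedDerivs 3 V) :
    IsPolyBigO 0 fun (_ : ℝ) q g => xiPlus V q g :=
  (isPolyBigO_xi hV).of_bound 1 fun _ _ q g => by
    rw [one_mul, xiPlus, Real.norm_of_nonneg (le_max_right _ _)]
    exact max_le (le_abs_self _) (abs_nonneg _)

theorem isPolyBigO_third_deriv_disp_sub (hV : HasBoundedDerivs 3 V) :
    IsPolyBigO 4 fun ε q g =>
      (iteratedFDeriv ℝ 3 V q fun _ => disp V ε q g)
        - iteratedFDeriv ℝ 3 V q fun _ => (√2 * ε) • g := by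
  obtain ⟨M, hM⟩ := hV.exists_norm_iteratedFDeriv_le 3 (by simp)
  have hV₁ := hV.of_le (show 1 ≤ 3 by norm_num)
  have hsum := (isPolyBigO_disp hV₁).norm.add (isPolyBigO_sqrt_two_mul_smul (Q := En n)).norm
  refine ((hsum.norm_pow 2).smul (isPolyBigO_disp_sub hV₁).norm).of_bound (M * 3)
    fun ε _ q g => ?_
  set d := disp V ε q g
  set h := (√2 * ε) • g
  calc ‖(iteratedFDeriv ℝ 3 V q fun _ => d) - iteratedFDeriv ℝ 3 V q fun _ => h‖
      ≤ ‖iteratedFDeriv ℝ 3 V q‖ * 3 * max ‖d‖ ‖h‖ ^ 2 * ‖d - h‖ := by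
        simpa [Pi.sub_def, pi_norm_const] using
          (iteratedFDeriv ℝ 3 V q).norm_image_sub_le (fun _ => d) fun _ => h
    _ ≤ M * 3 * (‖d‖ + ‖h‖) ^ 2 * ‖d - h‖ := by
        have hmax := max_le_add_of_nonneg (norm_nonneg d) (norm_nonneg h)
        have hM₀ := (norm_nonneg _).trans (hM q)
        gcongr
        exact hM q
    _ = M * 3 * ‖‖‖d‖ + ‖h‖‖ ^ 2 • ‖d - h‖‖ := by
        simp [abs_of_nonneg (add_nonneg (norm_nonneg d) (norm_nonneg h)), mul_assoc]

theorem pow_three_mul_xi (V : En n → ℝ) (ε : ℝ) (q g : En n) :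
    ε ^ 3 * xi V q g =
      ε ^ 2 / 2 * ⟪gradient V q, fderiv ℝ (gradient V) q ((√2 * ε) • g)⟫
        - 1 / 12 * iteratedFDeriv ℝ 3 V q fun _ => (√2 * ε) • g := by
  have hcubic : (iteratedFDeriv ℝ 3 V q fun _ => (√2 * ε) • g)
      = (√2 * ε) ^ 3 * iteratedFDeriv ℝ 3 V q fun _ => g := by
    simpa using (iteratedFDeriv ℝ 3 V q).map_smul_univ (fun _ => √2 * ε) fun _ => g
  have hsqrt : √2 ^ 3 = 2 * √2 := by rw [pow_succ, Real.sq_sqrt zero_le_two]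
  rw [hcubic, map_smul, real_inner_smul_right, mul_pow, hsqrt, xi]
  ring

theorem isPolyBigO_logRatio_add_pow_three_mul_xi (hV : HasBoundedDerivs 4 V) :
    IsPolyBigO 4 fun ε q g => logRatio V (ε ^ 2) q (disp V ε q g) + ε ^ 3 * xi V q g := by
  obtain ⟨M₁, h₁⟩ := (hV.of_le (by norm_num)).exists_norm_gradient_le
  obtain ⟨M₂, h₂⟩ := hV.exists_norm_iteratedFDeriv_le 2 (by simp)
  obtain ⟨M₃, h₃⟩ := hV.exists_norm_iteratedFDeriv_le 3 (by simp)
  obtain ⟨M₄, h₄⟩ := hV.exists_norm_iteratedFDeriv_le 4 (by simp)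
  obtain ⟨M, hM⟩ := (hV.of_le (by norm_num)).exists_norm_inner_gradient_fderiv_gradient_le
  have hV₃ := hV.of_le (show 3 ≤ 4 by norm_num)
  have hV₁ := hV.of_le (show 1 ≤ 4 by norm_num)
  have hd := isPolyBigO_disp hV₁
  have htrapezoid : IsPolyBigO 4 fun ε q g =>
      V q - V (q + disp V ε q g)
        + (1 / 2 : ℝ) • (fderiv ℝ V q (disp V ε q g) + fderiv ℝ V (q + disp V ε q g) (disp V ε q g))
        - (1 / 12 : ℝ) • iteratedFDeriv ℝ 3 V q fun _ => disp V ε q g :=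
    (hd.norm_pow 4).of_bound (3 / 2 * M₄) fun ε _ q g => by
      simpa [mul_assoc] using
        norm_trapezoid_error_sub_third_deriv_le hV.contDiff h₄ q (disp V ε q g)
  have hsq : IsPolyBigO 2 fun ε q g =>
      ‖gradient V (q + disp V ε q g)‖ ^ 2 - ‖gradient V q‖ ^ 2
        - 2 * ⟪gradient V q, fderiv ℝ (gradient V) q (disp V ε q g)⟫ :=
    (hd.norm_pow 2).of_bound (2 * M₁ * M₃ + M₂ ^ 2) fun ε _ q g => by
      simpa using abs_norm_gradient_add_sq_sub_le hV₃.contDiff h₁ h₂ h₃ q (disp V ε q g)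
  have hlinear : IsPolyBigO 2 fun ε q g =>
      ⟪gradient V q, fderiv ℝ (gradient V) q (disp V ε q g - (√2 * ε) • g)⟫ :=
    (isPolyBigO_disp_sub hV₁).of_bound M fun ε _ q g => hM q _
  refine ((htrapezoid.add ((isPolyBigO_third_deriv_disp_sub hV₃).const_smul (1 / 12))).sub
    (((hsq.const_smul (1 / 4)).add (hlinear.const_smul (1 / 2))).pow_smul 2)).congr
    fun ε _ q g => ?_
  rw [pow_three_mul_xi, logRatio, inner_gradient_left, inner_gradient_left, map_sub,
    inner_sub_right]
  simp only [smul_eq_mul]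
  ring

theorem isPolyBigO_logRatio (hV : HasBoundedDerivs 4 V) :
    IsPolyBigO 3 fun ε q g => logRatio V (ε ^ 2) q (disp V ε q g) :=
  (((isPolyBigO_logRatio_add_pow_three_mul_xi hV).mono (by norm_num)).sub
    ((isPolyBigO_xi (hV.of_le (by norm_num))).pow_smul 3)).congr
    fun _ _ _ _ => (add_sub_cancel_right _ _).symm

theorem abs_one_sub_min_exp_sub_max_neg_le_sq (a : ℝ) :
    |(1 - min 1 (Real.exp a)) - max (-a) 0| ≤ a ^ 2 := by
  rcases le_total 0 a with ha | ha
  · rw [min_eq_left (Real.one_le_exp ha), max_eq_right (neg_nonpos.2 ha), sub_self, sub_self,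
      abs_zero]
    exact sq_nonneg a
  · rw [min_eq_right (Real.exp_le_one_iff.2 ha), max_eq_left (neg_nonneg.2 ha),
      show 1 - Real.exp a - -a = -(Real.exp a - 1 - a) by ring, abs_neg]
    rcases le_total (-1) a with ha₁ | ha₁
    · exact Real.abs_exp_sub_one_sub_id_le (abs_le.2 ⟨ha₁, ha.trans zero_le_one⟩)
    · rw [abs_of_nonneg (by linarith [Real.add_one_le_exp a])]
      nlinarith [Real.exp_le_one_iff.2 ha]

theorem isPolyBigO_one_sub_acceptProb_sub_pow_three_mul_xiPlus (hV : HasBoundedDerivs 4 V) :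
    IsPolyBigO 4 fun ε q g => 1 - acceptProb V ε q g - ε ^ 3 * xiPlus V q g := by
  have hquadratic : IsPolyBigO 4 fun ε q g =>
      1 - acceptProb V ε q g - max (-logRatio V (ε ^ 2) q (disp V ε q g)) 0 :=
    (((isPolyBigO_logRatio hV).norm_pow 2).mono (by norm_num)).of_bound 1 fun ε hε q g => by
      rw [acceptProb, Rk_add_eq_min_exp_logRatio V (pow_pos hε.1 2)]
      simpa using abs_one_sub_min_exp_sub_max_neg_le_sq (logRatio V (ε ^ 2) q (disp V ε q g))
  have hleading : IsPolyBigO 4 fun ε q g =>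
      max (-logRatio V (ε ^ 2) q (disp V ε q g)) 0 - ε ^ 3 * xiPlus V q g :=
    (isPolyBigO_logRatio_add_pow_three_mul_xi hV).of_bound 1 fun ε hε q g => by
      rw [one_mul, xiPlus, mul_max_of_nonneg _ _ (pow_nonneg hε.1.le 3), mul_zero]
      refine (abs_max_sub_max_le_abs _ _ _).trans_eq ?_
      rw [← neg_add', abs_neg, Real.norm_eq_abs]
  exact (hquadratic.add hleading).congr fun _ _ _ _ => (sub_add_sub_cancel _ _ _).symm

theorem isPolyBigO_one_sub_acceptProb (hV : HasBoundedDerivs 4 V) :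
    IsPolyBigO 3 fun ε q g => 1 - acceptProb V ε q g :=
  (((isPolyBigO_one_sub_acceptProb_sub_pow_three_mul_xiPlus hV).mono (by norm_num)).add
    ((isPolyBigO_xiPlus (hV.of_le (by norm_num))).pow_smul 3)).congr
    fun _ _ _ _ => (sub_add_cancel _ _).symm

/-- The Metropolized increment, averaged over the acceptance variable, minus its expansion: the
Euler–Maruyama displacement corrected by the leading-order loss due to rejections. -/
def incrementRemainder (V : En n → ℝ) (ε : ℝ) (q g : En n) : En n :=
  acceptProb V ε q g • disp V ε q g - (√2 * ε) • g + ε ^ 2 • gradient V q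
    + (√2 * (ε ^ 2) ^ 2) • (xiPlus V q g • g)

theorem isPolyBigO_incrementRemainder (hV : HasBoundedDerivs 4 V) :
    IsPolyBigO 5 (incrementRemainder V) := by
  have hV₁ := hV.of_le (show 1 ≤ 4 by norm_num)
  have hdrift := (isPolyBigO_one_sub_acceptProb hV).smul (isPolyBigO_disp_sub hV₁)
  have hdiffusion := (isPolyBigO_one_sub_acceptProb_sub_pow_three_mul_xiPlus hV).smul
    isPolyBigO_sqrt_two_mul_smul
  refine ((hdrift.add hdiffusion).const_smul (-1)).congr fun ε _ q g => ?_
  rw [incrementRemainder, disp]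
  module

end Acceptance

section Increment

variable {n : ℕ} {V : En n → ℝ}

theorem sqrt_two_mul_sq {ε : ℝ} (hε : 0 ≤ ε) : √(2 * ε ^ 2) = √2 * ε := by
  rw [Real.sqrt_mul zero_le_two, Real.sqrt_sq hε]

theorem propMove_sq (V : En n → ℝ) {ε : ℝ} (hε : 0 ≤ ε) (q g : En n) :
    propMove V (ε ^ 2) q g = q + disp V ε q g := by
  rw [propMove, disp, sqrt_two_mul_sq hε]
  abel

theorem Rk_mem_Icc (V : En n → ℝ) {dt : ℝ} (hdt : 0 < dt) (q q' : En n) :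
    Rk V dt q q' ∈ Set.Icc 0 1 := by
  refine ⟨?_, min_le_left _ _⟩
  unfold Rk Tker
  positivity

theorem acceptProb_mem_Icc (V : En n → ℝ) {ε : ℝ} (hε : 0 < ε) (q g : En n) :
    acceptProb V ε q g ∈ Set.Icc 0 1 :=
  Rk_mem_Icc V (pow_pos hε 2) q _

theorem deltaInc_sq (V : En n → ℝ) {ε : ℝ} (hε : 0 ≤ ε) (q g : En n) :
    deltaInc V (ε ^ 2) q g =
      (Set.Iic (acceptProb V ε q g)).indicator fun _ => disp V ε q g := by
  funext u
  simp only [deltaInc, propMove_sq V hε, sqrt_two_mul_sq hε, neg_smul, neg_add_eq_sub,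
    Set.indicator_apply, Set.mem_Iic, acceptProb, disp]

theorem integral_deltaInc_sq (V : En n → ℝ) {ε : ℝ} (hε : 0 < ε) (q g : En n) :
    ∫ u in Set.Icc (0 : ℝ) 1, deltaInc V (ε ^ 2) q g u = acceptProb V ε q g • disp V ε q g := by
  obtain ⟨hR₀, hR₁⟩ := acceptProb_mem_Icc V hε q g
  have hinter : Set.Icc 0 1 ∩ Set.Iic (acceptProb V ε q g) = Set.Icc 0 (acceptProb V ε q g) := by
    rw [← Set.Ici_inter_Iic, Set.inter_assoc, Set.Iic_inter_Iic, min_eq_right hR₁,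
      Set.Ici_inter_Iic]
  rw [deltaInc_sq V hε.le, setIntegral_indicator measurableSet_Iic, setIntegral_const, hinter,
    Real.volume_real_Icc_of_le hR₀, sub_zero]

theorem continuous_xiPlus_smul (V : En n → ℝ) (q : En n) :
    Continuous fun g => xiPlus V q g • g := by
  unfold xiPlus xi
  fun_prop

theorem continuous_acceptProb_smul_disp (hV : ContDiff ℝ 1 V) {ε : ℝ} (hε : 0 < ε) (q : En n) :
    Continuous fun g => acceptProb V ε q g • disp V ε q g := by
  have hV₀ := hV.continuous
  have hgrad := (contDiff_gradient (n := 0) hV).continuous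
  simp only [acceptProb, Rk_add_eq_min_exp_logRatio V (pow_pos hε 2)]
  unfold logRatio disp
  fun_prop

theorem isPolyBigO_acceptProb_smul_disp (hV : HasBoundedDerivs 1 V) :
    IsPolyBigO 1 fun ε q g => acceptProb V ε q g • disp V ε q g :=
  (isPolyBigO_disp hV).of_bound 1 fun ε hε q g => by
    have hR := acceptProb_mem_Icc V hε.1 q g
    rw [norm_smul, Real.norm_of_nonneg hR.1]
    gcongr
    exact hR.2

theorem integrable_one_add_norm_pow_gauss (n m : ℕ) :
    Integrable (fun g => (1 + ‖g‖) ^ m) (gauss n) := by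
  rw [gauss_eq_stdGaussian]
  exact integrable_one_add_norm_pow _ m

theorem EguDelta_add_eq_integral_incrementRemainder (hV : HasBoundedDerivs 3 V) {ε : ℝ}
    (hε : ε ∈ Set.Ioc (0 : ℝ) 1) (q : En n) :
    EguDelta V (ε ^ 2) q + ε ^ 2 • gradient V q
        + (√2 * (ε ^ 2) ^ 2) • ∫ g, xiPlus V q g • g ∂(gauss n) =
      ∫ g, incrementRemainder V ε q g ∂(gauss n) := by
  have hμ := integrable_one_add_norm_pow_gauss n
  have hV₁ := hV.of_le (show 1 ≤ 3 by norm_num)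
  have hmove := (isPolyBigO_acceptProb_smul_disp hV₁).integrable hμ hε q
    (continuous_acceptProb_smul_disp hV₁.contDiff hε.1 q).aestronglyMeasurable
  have hnoise := (isPolyBigO_sqrt_two_mul_smul (Q := En n)).integrable hμ hε q
    (continuous_const_smul _).aestronglyMeasurable
  have hxi := (((isPolyBigO_xiPlus hV).smul .noise).integrable hμ hε q
    (continuous_xiPlus_smul V q).aestronglyMeasurable).fun_smul (√2 * (ε ^ 2) ^ 2)
  have hmean : ∫ g, (√2 * ε) • g ∂(gauss n) = 0 := by
    rw [integral_smul, gauss_eq_stdGaussian, ProbabilityTheory.integral_id_stdGaussian, smul_zero]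
  have : IsProbabilityMeasure (gauss n) := by
    rw [gauss_eq_stdGaussian]
    infer_instance
  have hdrift := integrable_const (μ := gauss n) (ε ^ 2 • gradient V q)
  simp only [incrementRemainder]
  rw [integral_add ((hmove.sub' hnoise).fun_add hdrift) hxi,
    integral_add (hmove.sub' hnoise) hdrift, integral_sub hmove hnoise, hmean, sub_zero,
    integral_const, probReal_univ, one_smul, integral_smul, EguDelta]
  simp only [integral_deltaInc_sq V hε.1]

end Increment

theorem hasBoundedDerivs_of_periodic {n : ℕ} {L : ℝ} (hL : L ≠ 0) {V : En n → ℝ} {N : ℕ}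
    (hV : ContDiff ℝ N V)
    (hper : ∀ (q : En n) (i : Fin n), V (q + L • EuclideanSpace.single i (1 : ℝ)) = V q) :
    HasBoundedDerivs N V := by
  have hunit : ∀ _ : Fin n, IsUnit L := fun _ => hL.isUnit
  refine hasBoundedDerivs_of_periodic_basis
    ((EuclideanSpace.basisFun (Fin n) ℝ).toBasis.isUnitSMul hunit) (fun i q => ?_) hV
  simpa [Module.Basis.isUnitSMul_apply] using hper q i

theorem stmt12_general {n : ℕ} {V : En n → ℝ} (hV : HasBoundedDerivs 4 V) :
    ∃ C ≥ (0 : ℝ), ∃ dts > (0 : ℝ), ∀ dt : ℝ, 0 < dt → dt ≤ dts → ∀ q : En n,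
      ‖EguDelta V dt q + dt • gradient V q +
          (Real.sqrt 2 * dt ^ 2) • ∫ g, xiPlus V q g • g ∂(gauss n)‖ ≤
        C * dt ^ ((5 : ℝ) / 2) := by
  obtain ⟨C, hC, hbound⟩ := (isPolyBigO_incrementRemainder hV).exists_norm_integral_le
    (integrable_one_add_norm_pow_gauss n)
  refine ⟨C, hC, 1, one_pos, fun dt hdt hdt₁ q => ?_⟩
  have hε : √dt ∈ Set.Ioc 0 1 := ⟨Real.sqrt_pos.2 hdt, Real.sqrt_le_one.2 hdt₁⟩
  have hpow : dt ^ ((5 : ℝ) / 2) = √dt ^ 5 := by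
    rw [Real.sqrt_eq_rpow, ← Real.rpow_mul_natCast hdt.le]
    norm_num
  have h := hbound √dt hε q
  rwa [← EguDelta_add_eq_integral_incrementRemainder (hV.of_le (by norm_num)) hε,
    Real.sq_sqrt hdt.le, ← hpow] at h

theorem stmt12 (n : ℕ) (hn : 1 ≤ n) (L : ℝ) (hL : 0 < L)
    (V : En n → ℝ) (hV : ContDiff ℝ (⊤ : ℕ∞) V)
    (hper : ∀ (q : En n) (i : Fin n), V (q + L • EuclideanSpace.single i (1 : ℝ)) = V q) :
    ∃ C ≥ (0 : ℝ), ∃ dts > (0 : ℝ), ∀ dt : ℝ, 0 < dt → dt ≤ dts → ∀ q : En n,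
      ‖EguDelta V dt q + dt • gradient V q +
          (Real.sqrt 2 * dt ^ 2) • ∫ g, xiPlus V q g • g ∂(gauss n)‖ ≤
        C * dt ^ ((5 : ℝ) / 2) :=
  stmt12_general (hasBoundedDerivs_of_periodic hL.ne' (contDiff_infty.1 hV 4) hper)
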